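/- Faà di Bruno's formula in the form stated with factorial normalization: Let f, g : ℝ → ℝ be n-times continuously differentiable and let x ∈ ℝ. Then (1/n!) · (f ∘ g)^{(n)}(x) equals the sum, over all tuples (m₁, …, mₙ) of non-negative integers satisfying m₁ + 2·m₂ + ⋯ + n·mₙ = n, of (1/p!) · f^{(p)}(g(x)) · (multinomial coefficient p! / (m₁!⋯mₙ!)) · ∏_{j=1}^{n} ( g^{(j)}(x) / j! )^{m_j}, where p = m₁ + ⋯ + mₙ; equivalently, the summand is f^{(p)}(g(x)) · ∏_{j=1}^{n} (1/m_j!) · ( g^{(j)}(x) / j! )^{m_j}. -/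

import Mathlib

open Finset

/-!
Grouping Mathlib's sum over ordered set partitions by the number `p` of blocks gives
`(f ∘ g)⁽ⁿ⁾ = ∑ₚ Bₙₚ(g⁽¹⁾, g⁽²⁾, …) • f⁽ᵖ⁾ ∘ g` with the partial Bell polynomials `Bₙₚ`. Rather than
counting the set partitions with prescribed block sizes, we apply this universal identity to
`f = (· ^ p)` and a polynomial `g = Q` vanishing at `0`: all derivatives of `f` at `0` but the
`p`-th vanish, so `p! Bₙₚ` is `n!` times the `n`-th coefficient of `Q ^ p`, which the multinomial
theorem computes.
-/

section Polynomials

open Polynomial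

variable {𝕜 : Type*} [NontriviallyNormedField 𝕜]

theorem iteratedDeriv_polynomial_eval (k : ℕ) (Q : 𝕜[X]) :
    iteratedDeriv k (fun t => Q.eval t) = fun t => (derivative^[k] Q).eval t := by
  induction k with
  | zero => rfl
  | succ k ih =>
    funext t
    rw [iteratedDeriv_succ, ih, Function.iterate_succ_apply', Polynomial.deriv]

theorem iteratedDeriv_polynomial_eval_zero (k : ℕ) (Q : 𝕜[X]) :
    iteratedDeriv k (fun t => Q.eval t) 0 = k.factorial * Q.coeff k := by
  simp only [iteratedDeriv_polynomial_eval, ← coeff_zero_eq_eval_zero, coeff_iterate_derivative,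
    zero_add, Nat.descFactorial_self, nsmul_eq_mul]

theorem coeff_sum_monomial_pow {ι R : Type*} [DecidableEq ι] [CommSemiring R]
    (s : Finset ι) (d : ι → ℕ) (b : ι → R) (n p : ℕ) :
    ((∑ i ∈ s, monomial (d i) (b i)) ^ p).coeff n =
      ∑ m ∈ s.piAntidiag p with ∑ i ∈ s, d i * m i = n,
        (Nat.multinomial s m : R) * ∏ i ∈ s, b i ^ m i := by
  have prod_monomial (m : ι → ℕ) :
      (Nat.multinomial s m : R[X]) * ∏ i ∈ s, monomial (d i) (b i) ^ m i =
        monomial (∑ i ∈ s, d i * m i) ((Nat.multinomial s m : R) * ∏ i ∈ s, b i ^ m i) := by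
    simp only [← C_mul_X_pow_eq_monomial, mul_pow, ← pow_mul, prod_mul_distrib,
      prod_pow_eq_pow_sum, map_mul, map_prod, map_pow, map_natCast, mul_assoc]
  simp only [sum_pow_eq_sum_piAntidiag, prod_monomial, finsetSum_coeff, coeff_monomial, sum_filter]

theorem coeff_sum_monomial_succ {R : Type*} [Semiring R] {n k : ℕ} (a : ℕ → R)
    (hk : k ∈ Icc 1 n) :
    (∑ j : Fin n, monomial (j.1 + 1) (a (j.1 + 1))).coeff k = a k := by
  obtain ⟨k, rfl⟩ := Nat.exists_eq_add_of_le' (mem_Icc.1 hk).1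
  have hkn : k < n := (mem_Icc.1 hk).2
  rw [finsetSum_coeff, sum_eq_single ⟨k, hkn⟩ _ (by simp), coeff_monomial_same]
  intro j _ hj
  exact coeff_monomial_of_ne _ fun h => hj (Fin.ext (Nat.succ_injective h).symm)

end Polynomials

section PartialBell

/-- The partial (exponential) Bell polynomial `Bₙₚ`, evaluated at the sequence `y`: the sum over all
partitions of an `n`-element set into `p` blocks of the product of `y |B|` over the blocks `B`.
Mathlib's `OrderedFinpartition` lists the blocks in a canonical order, so each set partition is
counted once. The value `y 0` is irrelevant. -/
noncomputable def partialBell {R : Type*} [CommSemiring R] (n p : ℕ) (y : ℕ → R) : R :=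
  ∑ c : OrderedFinpartition n with c.length = p, ∏ j, y (c.partSize j)

theorem partialBell_congr {R : Type*} [CommSemiring R] {n p : ℕ} {y z : ℕ → R}
    (h : ∀ k ∈ Icc 1 n, y k = z k) : partialBell n p y = partialBell n p z :=
  sum_congr rfl fun c _ => prod_congr rfl fun j _ =>
    h _ (mem_Icc.2 ⟨c.partSize_pos j, c.partSize_le j⟩)

variable {𝕜 : Type*} [NontriviallyNormedField 𝕜]

theorem iteratedDeriv_scomp_eq_sum_partialBell
    {E : Type*} [NormedAddCommGroup E] [NormedSpace 𝕜 E] {n : ℕ} {f : 𝕜 → E} {g : 𝕜 → 𝕜} {x : 𝕜}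
    (hf : ContDiffAt 𝕜 n f (g x)) (hg : ContDiffAt 𝕜 n g x) :
    iteratedDeriv n (f ∘ g) x =
      ∑ p ∈ range (n + 1),
        partialBell n p (fun k => iteratedDeriv k g x) • iteratedDeriv p f (g x) := by
  have length_mem (c : OrderedFinpartition n) (_ : c ∈ univ) : c.length ∈ range (n + 1) :=
    mem_range_succ_iff.2 c.length_le
  rw [iteratedDeriv_scomp_eq_sum_orderedFinpartition hf hg le_rfl,
    ← sum_fiberwise_of_maps_to length_mem]
  refine sum_congr rfl fun p _ => ?_
  rw [partialBell, sum_smul]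
  exact sum_congr rfl fun c hc => by simp only [← (mem_filter.1 hc).2]

open Polynomial in
theorem factorial_mul_partialBell_coeff (n p : ℕ) {Q : 𝕜[X]} (hQ : Q.coeff 0 = 0) :
    p.factorial * partialBell n p (fun k => k.factorial * Q.coeff k) =
      n.factorial * (Q ^ p).coeff n := by
  have hQ_smooth : ContDiff 𝕜 n fun t => Q.eval t := by
    simpa only [coe_aeval_eq_eval] using contDiff_aeval (𝕜 := 𝕜) Q n
  have eval_pow_eq_comp : (fun t => (Q ^ p).eval t) = (fun s => s ^ p) ∘ fun t => Q.eval t := by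
    funext t
    exact eval_pow p
  have pow_smooth : ContDiff 𝕜 n fun s : 𝕜 => s ^ p := contDiff_id.pow p
  rw [← iteratedDeriv_polynomial_eval_zero, eval_pow_eq_comp,
    iteratedDeriv_comp_eq_sum_orderedFinpartition pow_smooth.contDiffAt hQ_smooth.contDiffAt le_rfl]
  simp only [← coeff_zero_eq_eval_zero, hQ, iteratedDeriv_polynomial_eval_zero,
    iteratedDeriv_fun_pow_zero, Nat.cast_ite, Nat.cast_zero, ite_mul, zero_mul, ← sum_filter,
    partialBell, mul_sum]

theorem one_div_factorial_mul_partialBell [CharZero 𝕜] (n p : ℕ) (y : ℕ → 𝕜) :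
    1 / (n.factorial : 𝕜) * partialBell n p y =
      ∑ m ∈ (univ : Finset (Fin n)).piAntidiag p with ∑ j : Fin n, (j.1 + 1) * m j = n,
        1 / (p.factorial : 𝕜) * (Nat.multinomial univ m : 𝕜) *
          ∏ j : Fin n, (y (j.1 + 1) / ((j.1 + 1).factorial : 𝕜)) ^ m j := by
  set Q : Polynomial 𝕜 :=
    ∑ j : Fin n, Polynomial.monomial (j.1 + 1) (y (j.1 + 1) / ((j.1 + 1).factorial : 𝕜)) with hQ
  have factorial_ne_zero (k : ℕ) : (k.factorial : 𝕜) ≠ 0 := Nat.cast_ne_zero.2 k.factorial_ne_zero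
  have hQ_zero : Q.coeff 0 = 0 := by
    simp [hQ, Polynomial.finsetSum_coeff, Polynomial.coeff_monomial]
  have hQ_coeff (k : ℕ) (hk : k ∈ Icc 1 n) : y k = k.factorial * Q.coeff k := by
    rw [hQ, coeff_sum_monomial_succ (fun k => y k / (k.factorial : 𝕜)) hk,
      mul_div_cancel₀ _ (factorial_ne_zero k)]
  calc 1 / (n.factorial : 𝕜) * partialBell n p y
    _ = 1 / (p.factorial : 𝕜) * (Q ^ p).coeff n := by
      have bell_eq_coeff := factorial_mul_partialBell_coeff n p hQ_zero
      rw [← partialBell_congr hQ_coeff] at bell_eq_coeff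
      field_simp [factorial_ne_zero]
      linear_combination bell_eq_coeff
    _ = _ := by
      rw [hQ, coeff_sum_monomial_pow, mul_sum]
      simp only [mul_assoc]

end PartialBell

theorem sum_range_piAntidiag_eq_sum_piFinset {ι M : Type*} [Fintype ι] [DecidableEq ι]
    [AddCommMonoid M] {d : ι → ℕ} (hd : ∀ i, 0 < d i) (n : ℕ) (F : (ι → ℕ) → M) :
    ∑ p ∈ range (n + 1), ∑ m ∈ univ.piAntidiag p with ∑ i, d i * m i = n, F m =
      ∑ m ∈ Fintype.piFinset fun _ : ι => range (n + 1) with ∑ i, d i * m i = n, F m := by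
  have sum_le (m : ι → ℕ) : ∑ i, m i ≤ ∑ i, d i * m i :=
    sum_le_sum fun i _ => Nat.le_mul_of_pos_left _ (hd i)
  have le_sum (m : ι → ℕ) (i : ι) : m i ≤ ∑ i, m i :=
    single_le_sum (fun _ _ => Nat.zero_le _) (mem_univ i)
  have sum_mem (m : ι → ℕ) (hm : m ∈ {m ∈ Fintype.piFinset fun _ : ι => range (n + 1) |
      ∑ i, d i * m i = n}) : ∑ i, m i ∈ range (n + 1) :=
    mem_range_succ_iff.2 ((sum_le m).trans_eq (mem_filter.1 hm).2)
  rw [← sum_fiberwise_of_maps_to sum_mem]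
  refine sum_congr rfl fun p _ => sum_congr ?_ fun _ _ => rfl
  ext m
  have lt_of_weight (h : ∑ i, d i * m i = n) (i : ι) : m i < n + 1 :=
    Nat.lt_succ_of_le (((le_sum m i).trans (sum_le m)).trans_eq h)
  simp only [mem_filter, mem_piAntidiag, Fintype.mem_piFinset, mem_range, mem_univ, implies_true,
    and_true]
  tauto

theorem faa_di_bruno_normalized_general {𝕜 E : Type*} [NontriviallyNormedField 𝕜] [CharZero 𝕜]
    [NormedAddCommGroup E] [NormedSpace 𝕜 E] {n : ℕ} {f : 𝕜 → E} {g : 𝕜 → 𝕜} {x : 𝕜}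
    (hf : ContDiffAt 𝕜 n f (g x)) (hg : ContDiffAt 𝕜 n g x) :
    (1 / (n.factorial : 𝕜)) • iteratedDeriv n (f ∘ g) x =
      ∑ m ∈ Fintype.piFinset fun _ : Fin n => range (n + 1) with ∑ j : Fin n, (j.1 + 1) * m j = n,
        (1 / ((∑ j, m j).factorial : 𝕜) * (Nat.multinomial univ m : 𝕜) *
          ∏ j : Fin n, (iteratedDeriv (j.1 + 1) g x / ((j.1 + 1).factorial : 𝕜)) ^ m j) •
            iteratedDeriv (∑ j, m j) f (g x) := by
  rw [iteratedDeriv_scomp_eq_sum_partialBell hf hg, smul_sum,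
    ← sum_range_piAntidiag_eq_sum_piFinset fun j : Fin n => j.1.succ_pos]
  refine sum_congr rfl fun p _ => ?_
  rw [smul_smul, one_div_factorial_mul_partialBell, sum_smul]
  refine sum_congr rfl fun m hm => ?_
  rw [(mem_piAntidiag.1 (mem_filter.1 hm).1).1]

/-- **Faà di Bruno's formula with factorial normalization.**
`(1/n!) (f ∘ g)^{(n)}(x)` equals the sum over tuples `(m₁, …, mₙ)` with
`∑ j·m_j = n` of `(1/p!) · f^{(p)}(g x) · (p!/(m₁!⋯mₙ!)) · ∏ (g^{(j)}(x)/j!)^{m_j}`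
where `p = ∑ m_j` and `p!/(m₁!⋯mₙ!)` is the multinomial coefficient. -/
theorem faa_di_bruno_normalized (n : ℕ) (f g : ℝ → ℝ)
    (hf : ContDiff ℝ n f) (hg : ContDiff ℝ n g) (x : ℝ) :
    (1 / (n.factorial : ℝ)) * iteratedDeriv n (f ∘ g) x =
      ∑ m ∈ (Fintype.piFinset fun _ : Fin n => Finset.range (n + 1)).filter
          (fun m : Fin n → ℕ => ∑ j : Fin n, (j.1 + 1) * m j = n),
        (1 / ((∑ j : Fin n, m j).factorial : ℝ)) *
          iteratedDeriv (∑ j : Fin n, m j) f (g x) *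
          (Nat.multinomial Finset.univ m : ℝ) *
          ∏ j : Fin n,
            (iteratedDeriv (j.1 + 1) g x / ((j.1 + 1).factorial : ℝ)) ^ m j := by
  simpa only [smul_eq_mul, mul_comm, mul_left_comm, mul_assoc] using
    faa_di_bruno_normalized_general hf.contDiffAt (hg.contDiffAt (x := x))
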